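/- arXiv:2411.04070 — 3 statements merged into one kernel-verified Lean document; each statement's English description precedes it below -/
import Mathlib

section
/- Let κ be a (P,ρ)-kernel on a locally finite weakly ranked poset (P,ρ). Then for every pair s < t in P, the polynomial κ_{st}(x) is divisible by x − 1 in ℤ[x]. -/
/-!
Evaluation at `x = 1` does not see `rev`, so `k = κ(1)` satisfies `k² = δ` in the incidence algebra
over `ℤ`. Since `k` is `1` on the diagonal, this forces `k = δ`: on an interval `s < t` the two
endpoint terms of `(k²)_{st} = 0` contribute `2 k_{st}`, while every other term vanishes by
induction on the rank `ρ_{st}`. Hence `κ_{st}(1) = 0` for `s < t`.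
-/

open Finset Polynomial
open scoped Classical

noncomputable section

variable {α : Type*}

/-- Convolution product in the incidence algebra of a locally finite poset over `ℤ[x]`.
Only the values on intervals `s ≤ t` are relevant. -/
def conv [PartialOrder α] [LocallyFiniteOrder α] (a b : α → α → Polynomial ℤ) :
    α → α → Polynomial ℤ :=
  fun s t => ∑ w ∈ Finset.Icc s t, a s w * b w t

/-- The identity `δ` of the incidence algebra. -/
def dlt [PartialOrder α] : α → α → Polynomial ℤ :=
  fun s t => if s = t then 1 else 0

/-- The involution `a ↦ a^rev`, given by `(a^rev)_{st}(x) = x^{ρ_{st}} a_{st}(1/x)`. -/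
def rev (ρ : α → α → ℕ) (a : α → α → Polynomial ℤ) : α → α → Polynomial ℤ :=
  fun s t => (a s t).reflect (ρ s t)

/-- A weak rank function on a poset. -/
structure IsWeakRank [Preorder α] (ρ : α → α → ℕ) : Prop where
  pos : ∀ ⦃s t : α⦄, s < t → 0 < ρ s t
  add : ∀ ⦃s w t : α⦄, s ≤ w → w ≤ t → ρ s t = ρ s w + ρ w t

/-- `κ` is a `(P,ρ)`-kernel: it lies in `I_ρ(P)`, is `1` on the diagonal, and `κ⁻¹ = κ^rev`. -/
structure IsKernel [PartialOrder α] [LocallyFiniteOrder α] (ρ : α → α → ℕ)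
    (κ : α → α → Polynomial ℤ) : Prop where
  degLE : ∀ ⦃s t : α⦄, s ≤ t → (κ s t).natDegree ≤ ρ s t
  diag : ∀ s : α, κ s s = 1
  left : ∀ ⦃s t : α⦄, s ≤ t → conv (rev ρ κ) κ s t = dlt s t
  right : ∀ ⦃s t : α⦄, s ≤ t → conv κ (rev ρ κ) s t = dlt s t

/-- The reduced kernel `κ̄`: `κ̄_{st} = κ_{st}/(x-1)` for `s < t` and `κ̄_{ss} = -1`. -/
def red [PartialOrder α] (κ : α → α → Polynomial ℤ) : α → α → Polynomial ℤ :=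
  fun s t => if s = t then -1 else κ s t /ₘ (X - 1)

/-- `H` is the Chow function of `κ`, i.e. `H = -(κ̄)⁻¹`. -/
structure IsChow [PartialOrder α] [LocallyFiniteOrder α] (κ H : α → α → Polynomial ℤ) : Prop where
  left : ∀ ⦃s t : α⦄, s ≤ t → conv (red κ) H s t = -dlt s t
  right : ∀ ⦃s t : α⦄, s ≤ t → conv H (red κ) s t = -dlt s t

/-- `f` is the right KLS function of the kernel `κ`. -/
structure IsRightKLS [PartialOrder α] [LocallyFiniteOrder α] (ρ : α → α → ℕ)
    (κ f : α → α → Polynomial ℤ) : Prop where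
  diag : ∀ s : α, f s s = 1
  degLT : ∀ ⦃s t : α⦄, s < t → 2 * (f s t).natDegree < ρ s t
  rev_eq : ∀ ⦃s t : α⦄, s ≤ t → rev ρ f s t = conv κ f s t

/-- `g` is the left KLS function of the kernel `κ`. -/
structure IsLeftKLS [PartialOrder α] [LocallyFiniteOrder α] (ρ : α → α → ℕ)
    (κ g : α → α → Polynomial ℤ) : Prop where
  diag : ∀ s : α, g s s = 1
  degLT : ∀ ⦃s t : α⦄, s < t → 2 * (g s t).natDegree < ρ s t
  rev_eq : ∀ ⦃s t : α⦄, s ≤ t → rev ρ g s t = conv g κ s t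

/-- `p` is symmetric with center of symmetry `d/2`, i.e. `p(x) = x^d p(1/x)`. -/
def PolySymm (d : ℕ) (p : Polynomial ℤ) : Prop := p.natDegree ≤ d ∧ p.reflect d = p

/-- All coefficients of `p` are non-negative. -/
def PolyNonneg (p : Polynomial ℤ) : Prop := ∀ n, 0 ≤ p.coeff n

/-- The coefficient sequence of `p` is unimodal. -/
def PolyUnimodal (p : Polynomial ℤ) : Prop :=
  ∃ j, (∀ i < j, p.coeff i ≤ p.coeff (i + 1)) ∧ ∀ i, j ≤ i → p.coeff (i + 1) ≤ p.coeff i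

end

theorem eval_one_reflect {N : ℕ} {p : Polynomial ℤ} (h : p.natDegree ≤ N) :
    (p.reflect N).eval 1 = p.eval 1 := by
  let _ : Invertible (1 : ℤ) := invertibleOne
  have := eval₂_reflect_mul_pow (RingHom.id ℤ) 1 N p h
  simpa [eval₂_id] using this

theorem kernel_eval_one [PartialOrder α] [LocallyFiniteOrder α]
    (ρ : α → α → ℕ) (hρ : IsWeakRank ρ)
    (κ : α → α → Polynomial ℤ) (hκ : IsKernel ρ κ) (n : ℕ) :
    ∀ s t : α, s < t → ρ s t = n → (κ s t).eval 1 = 0 := by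
  induction n using Nat.strong_induction_on with
  | _ n ih =>
  intro s t hst hn
  have h := congrArg (eval 1) (hκ.right hst.le)
  simp only [conv, dlt, rev, if_neg hst.ne, eval_finsetSum, eval_mul, eval_zero] at h
  -- Only the endpoints `w = s` and `w = t` contribute to the convolution.
  rw [Finset.sum_eq_add (a := s) (b := t) hst.ne] at h
  · rw [eval_one_reflect (hκ.degLE hst.le), eval_one_reflect (hκ.degLE le_rfl), hκ.diag, hκ.diag,
      eval_one] at h
    linarith
  · rintro w hw ⟨hws, hwt⟩
    obtain ⟨hsw, hwt'⟩ := Finset.mem_Icc.1 hw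
    have hlt : ρ s w < n := by
      have h1 := hρ.add hsw hwt'
      have h2 := hρ.pos (lt_of_le_of_ne hwt' hwt)
      omega
    rw [ih _ hlt s w (lt_of_le_of_ne hsw (Ne.symm hws)) rfl, zero_mul]
  · intro h'
    exact absurd (Finset.left_mem_Icc.2 hst.le) h'
  · intro h'
    exact absurd (Finset.right_mem_Icc.2 hst.le) h'

/-- Lemma 3.1: for a `(P,ρ)`-kernel `κ` on a locally finite weakly ranked poset, the polynomial
`κ_{st}(x)` is divisible by `x - 1` for every `s < t`. -/
theorem kernel_dvd_X_sub_one [PartialOrder α] [LocallyFiniteOrder α]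
    (ρ : α → α → ℕ) (hρ : IsWeakRank ρ)
    (κ : α → α → Polynomial ℤ) (hκ : IsKernel ρ κ)
    (s t : α) (hst : s < t) :
    (X - 1 : Polynomial ℤ) ∣ κ s t := by
  rw [← map_one (C : ℤ →+* Polynomial ℤ), dvd_iff_isRoot]
  exact kernel_eval_one ρ hρ κ hκ _ s t hst rfl
end

section
/- Let κ be a (P,ρ)-kernel on a locally finite weakly ranked poset (P,ρ) and let ℋ be the associated Chow function. Then for every s < t in P, the coefficient of x^{ρ_{st}−1} in ℋ_{st}(x) equals the coefficient of x^{ρ_{st}} in κ_{st}(x). In particular, if κ is non-degenerate (i.e. deg κ_{st} = ρ_{st} for every s ≤ t), then deg ℋ_{st}(x) = ρ_{st} − 1 for every s < t. -/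
/-!
Writing out `κ̄ ℋ = -δ` at `s < t` gives the recursion `ℋ_{st} = κ̄_{st} + ∑_{s<w<t} κ̄_{sw} ℋ_{wt}`
(`chow_rec`). Division by `x - 1` lowers the degree by one, so `deg κ̄_{sw} ≤ ρ_{sw} - 1`, and
induction on `ρ_{st}` yields `deg ℋ_{st} ≤ ρ_{st} - 1` (`chow_natDegree_le`). Every term of the sum
over `s < w < t` then has degree at most `ρ_{st} - 2`, so the coefficient of `x^{ρ_{st}-1}` in
`ℋ_{st}` is that of `κ̄_{st}`, which is the coefficient of `x^{ρ_{st}}` in `κ_{st}`.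
Divisibility of `κ_{st}` by `x - 1` plays no role: the remainder is constant and `ρ_{st} > 0`.
-/

open Finset Polynomial
open scoped Classical

theorem natDegree_divByMonic_X_sub_one_le {p : Polynomial ℤ} {n : ℕ} (hp : p.natDegree ≤ n) :
    (p /ₘ (X - 1)).natDegree ≤ n - 1 := by
  have hm : (X - 1 : Polynomial ℤ).natDegree = 1 := by
    simpa using natDegree_X_sub_C (1 : ℤ)
  have hmon : (X - 1 : Polynomial ℤ).Monic := by simpa using monic_X_sub_C (1 : ℤ)
  rw [natDegree_divByMonic _ hmon, hm]
  omega

theorem coeff_divByMonic_X_sub_one {p : Polynomial ℤ} {n : ℕ} (hn : 0 < n)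
    (hp : p.natDegree ≤ n) : (p /ₘ (X - 1)).coeff (n - 1) = p.coeff n := by
  obtain ⟨m, rfl⟩ : ∃ m, n = m + 1 := ⟨n - 1, by omega⟩
  have hq : (p /ₘ (X - 1)).coeff (m + 1) = 0 :=
    coeff_eq_zero_of_natDegree_lt
      (lt_of_le_of_lt (natDegree_divByMonic_X_sub_one_le hp) (by omega))
  have hr : (p %ₘ (X - 1)) = C (p.eval 1) := by
    simpa using modByMonic_X_sub_C_eq_C_eval p (1 : ℤ)
  have h := congrArg (fun q => q.coeff (m + 1)) (modByMonic_add_div p (X - 1 : Polynomial ℤ))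
  simp only [hr, coeff_add, sub_mul, one_mul, coeff_sub, coeff_X_mul, coeff_C_succ, hq] at h
  simpa using h

theorem chow_diag [PartialOrder α] [LocallyFiniteOrder α] {κ H : α → α → Polynomial ℤ}
    (hH : IsChow κ H) (t : α) : H t t = 1 := by
  simpa [conv, dlt, red] using hH.left (le_refl t)

/-- The defining recursion of the Chow function, read off from `κ̄ ℋ = -δ` at `s < t`. -/
theorem chow_rec [PartialOrder α] [LocallyFiniteOrder α] {κ H : α → α → Polynomial ℤ}
    (hH : IsChow κ H) {s t : α} (hst : s < t) :
    H s t = κ s t /ₘ (X - 1) + ∑ w ∈ Finset.Ioo s t, (κ s w /ₘ (X - 1)) * H w t := by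
  have h := hH.left hst.le
  have hsum : ∑ w ∈ Finset.Ioo s t, red κ s w * H w t
      = ∑ w ∈ Finset.Ioo s t, (κ s w /ₘ (X - 1)) * H w t :=
    Finset.sum_congr rfl fun w hw => by
      simp [red, (Finset.mem_Ioo.1 hw).1.ne]
  rw [conv, ← Finset.Ioc_insert_left hst.le, Finset.sum_insert (by simp),
    ← Finset.Ioo_insert_right hst, Finset.sum_insert (by simp), hsum, chow_diag hH] at h
  simp only [red, dlt, hst.ne, if_true, if_false] at h
  linear_combination -h

theorem natDegree_term_lt [PartialOrder α] [LocallyFiniteOrder α]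
    {ρ : α → α → ℕ} (hρ : IsWeakRank ρ) {κ H : α → α → Polynomial ℤ} (hκ : IsKernel ρ κ)
    {s w t : α} (hsw : s < w) (hwt : w < t) (hHw : (H w t).natDegree ≤ ρ w t - 1) :
    ((κ s w /ₘ (X - 1)) * H w t).natDegree < ρ s t - 1 := by
  have h1 := natDegree_divByMonic_X_sub_one_le (hκ.degLE hsw.le)
  have h2 := natDegree_mul_le (p := κ s w /ₘ (X - 1)) (q := H w t)
  have h3 := hρ.pos hsw
  have h4 := hρ.pos hwt
  have h5 := hρ.add hsw.le hwt.le
  omega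

theorem chow_natDegree_le [PartialOrder α] [LocallyFiniteOrder α]
    {ρ : α → α → ℕ} (hρ : IsWeakRank ρ) {κ H : α → α → Polynomial ℤ} (hκ : IsKernel ρ κ)
    (hH : IsChow κ H) {s t : α} (hst : s < t) : (H s t).natDegree ≤ ρ s t - 1 := by
  induction hn : ρ s t using Nat.strong_induction_on generalizing s with
  | _ n ih =>
    subst hn
    rw [chow_rec hH hst]
    refine natDegree_add_le_of_degree_le
      (natDegree_divByMonic_X_sub_one_le (hκ.degLE hst.le)) ?_
    refine natDegree_sum_le_of_forall_le _ _ fun w hw => ?_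
    obtain ⟨hsw, hwt⟩ := Finset.mem_Ioo.1 hw
    have hlt : ρ w t < ρ s t := by
      have := hρ.add hsw.le hwt.le
      have := hρ.pos hsw
      omega
    exact (natDegree_term_lt hρ hκ hsw hwt (ih _ hlt hwt rfl)).le

/-- Proposition 3.4(i): for the Chow function `ℋ` of a kernel `κ`,
`[x^{ρ_{st}-1}] ℋ_{st}(x) = [x^{ρ_{st}}] κ_{st}(x)` for all `s < t`; in particular if `κ` is
non-degenerate then `deg ℋ_{st} = ρ_{st} - 1` for all `s < t`. -/
theorem chow_top_coeff [PartialOrder α] [LocallyFiniteOrder α]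
    (ρ : α → α → ℕ) (hρ : IsWeakRank ρ)
    (κ : α → α → Polynomial ℤ) (hκ : IsKernel ρ κ)
    (H : α → α → Polynomial ℤ) (hH : IsChow κ H) :
    (∀ s t : α, s < t → (H s t).coeff (ρ s t - 1) = (κ s t).coeff (ρ s t)) ∧
    ((∀ s t : α, s ≤ t → (κ s t).natDegree = ρ s t) →
      ∀ s t : α, s < t → (H s t).natDegree = ρ s t - 1) := by
  have key : ∀ s t : α, s < t → (H s t).coeff (ρ s t - 1) = (κ s t).coeff (ρ s t) := by
    intro s t hst
    rw [chow_rec hH hst, coeff_add, finsetSum_coeff,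
      coeff_divByMonic_X_sub_one (hρ.pos hst) (hκ.degLE hst.le), Finset.sum_eq_zero, add_zero]
    intro w hw
    obtain ⟨hsw, hwt⟩ := Finset.mem_Ioo.1 hw
    exact coeff_eq_zero_of_natDegree_lt
      (natDegree_term_lt hρ hκ hsw hwt (chow_natDegree_le hρ hκ hH hwt))
  refine ⟨key, fun hdeg s t hst => ?_⟩
  refine le_antisymm (chow_natDegree_le hρ hκ hH hst) (le_natDegree_of_ne_zero ?_)
  rw [key s t hst, ← hdeg s t hst.le, coeff_natDegree, Ne, leadingCoeff_eq_zero]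
  intro h0
  -- The zero polynomial has `natDegree` zero, whereas `ρ s t > 0`.
  have h1 := hdeg s t hst.le
  have h2 := hρ.pos hst
  rw [h0, natDegree_zero] at h1
  omega
end

section
/- Let κ be a (P,ρ)-kernel on a locally finite weakly ranked poset (P,ρ). The Chow function ℋ satisfies: (i) ℋ_{ss}(x) = 1 for all s ∈ P; (ii) ℋ_{st}(x) = x^{ρ_{st}−1} ℋ_{st}(1/x) for all s < t; (iii) both κ·ℋ = ℋ^rev and ℋ·κ = ℋ^rev. Moreover, ℋ is the unique element H of I_ρ(P) satisfying (i), (ii), and at least one of the two identities κ·H = H^rev or H·κ = H^rev. -/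
/-!
The argument takes place in the incidence algebra, with `rev` multiplicative on `I_ρ(P)`.

Since `κ(1)² = δ` and `κ(1)` is unipotent, `κ(1) = δ`; hence `κ̄` is an honest quotient and
`(x - 1) κ̄ = κ - x δ`. Multiplying by `ℋ = -κ̄⁻¹` on either side gives
`κ ℋ = ℋ κ = x ℋ - (x - 1) δ`. Reversing the relation for `κ̄` gives
`(x - 1) κ̄^rev = δ - x κ^rev`, so `κ̄^rev = κ^rev κ̄`, and inverting yields `ℋ^rev = ℋ κ`.
This proves (iii), and off the diagonal it reads `ℋ^rev = x ℋ`, which is (ii).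

Conversely, (i) and (ii) say `H^rev = x H - (x - 1) δ`, so that `κ H = H^rev` becomes
`(x - 1) κ̄ H = -(x - 1) δ`. Cancelling `x - 1` gives `κ̄ H = -δ`, i.e. `H = ℋ`; the identity
`H κ = H^rev` is treated in the same way on the other side.
-/

open Finset Polynomial
open scoped Classical

section Helpers

variable {α : Type*}

/-! ### Reflections of polynomials -/

lemma reflect_eval_one {n : ℕ} {p : Polynomial ℤ} (hp : p.natDegree ≤ n) :
    (p.reflect n).eval 1 = p.eval 1 := by
  let _ : Invertible (1 : ℤ) := invertibleOne
  simpa [eval₂_eq_eval_map] using eval₂_reflect_mul_pow (RingHom.id ℤ) 1 n p hp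

lemma reflect_succ_eq_X_mul {n : ℕ} {p : Polynomial ℤ} (hp : p.natDegree ≤ n) :
    p.reflect (n + 1) = X * p.reflect n := by
  have h := reflect_mul (1 : Polynomial ℤ) p (F := 1) (by simp) hp
  rwa [one_mul, reflect_one, pow_one, add_comm] at h

/-- For `p` of degree at most `r`, symmetry with center `(r - 1) / 2` amounts to
`x ^ r * p (1 / x) = x * p`; the degree bound `r - 1` is then automatic, because the constant
term of the left-hand side is the coefficient of `x ^ r` in `p`. -/
lemma polySymm_of_reflect {r : ℕ} (hr : 0 < r) {p : Polynomial ℤ} (hp : p.natDegree ≤ r)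
    (h : p.reflect r = X * p) : PolySymm (r - 1) p := by
  obtain ⟨n, rfl⟩ : ∃ n, r = n + 1 := ⟨r - 1, by omega⟩
  have h0 : p.coeff (n + 1) = 0 := by
    have := congrArg (fun q => q.coeff 0) h
    simpa [coeff_reflect] using this
  have hd : p.natDegree ≤ n := by
    rw [natDegree_le_iff_coeff_eq_zero]
    intro m hm
    rcases eq_or_lt_of_le (Nat.succ_le_of_lt hm) with rfl | hm'
    · exact h0
    · exact coeff_eq_zero_of_natDegree_lt (lt_of_le_of_lt hp hm')
  refine ⟨by simpa using hd, ?_⟩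
  rw [reflect_succ_eq_X_mul hd] at h
  simpa using mul_left_cancel₀ X_ne_zero h

lemma PolySymm.reflect_eq {r : ℕ} (hr : 0 < r) {p : Polynomial ℤ} (h : PolySymm (r - 1) p) :
    p.reflect r = X * p := by
  obtain ⟨n, rfl⟩ : ∃ n, r = n + 1 := ⟨r - 1, by omega⟩
  obtain ⟨h1, h2⟩ := h
  rw [Nat.add_sub_cancel] at h1 h2
  rw [reflect_succ_eq_X_mul h1, h2]

/-! ### Passage to the incidence algebra -/

lemma IsWeakRank.self [PartialOrder α] {ρ : α → α → ℕ} (hρ : IsWeakRank ρ) (s : α) :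
    ρ s s = 0 := by
  have := hρ.add (le_refl s) (le_refl s)
  omega

/-- The element of Mathlib's incidence algebra with the same values as `a` on intervals; the
values of `a` off the order relation are discarded. -/
noncomputable def toInc [PartialOrder α] (a : α → α → Polynomial ℤ) : IncidenceAlgebra (Polynomial ℤ) α :=
  ⟨fun s t => if s ≤ t then a s t else 0, fun _ _ h => if_neg h⟩

lemma toInc_apply [PartialOrder α] (a : α → α → Polynomial ℤ) {s t : α} (h : s ≤ t) :
    toInc a s t = a s t := if_pos h

lemma toInc_eq_iff [PartialOrder α] {a b : α → α → Polynomial ℤ} :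
    toInc a = toInc b ↔ ∀ s t, s ≤ t → a s t = b s t := by
  constructor
  · intro h s t hst
    rw [← toInc_apply a hst, h, toInc_apply b hst]
  · intro h
    ext1 s t hst
    rw [toInc_apply a hst, toInc_apply b hst, h s t hst]

lemma toInc_conv [PartialOrder α] [LocallyFiniteOrder α] (a b : α → α → Polynomial ℤ) :
    toInc (conv a b) = toInc a * toInc b := by
  ext1 s t hst
  rw [toInc_apply _ hst, IncidenceAlgebra.mul_apply]
  refine Finset.sum_congr rfl fun w hw => ?_
  obtain ⟨h1, h2⟩ := Finset.mem_Icc.1 hw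
  rw [toInc_apply _ h1, toInc_apply _ h2]

lemma toInc_dlt [PartialOrder α] : toInc (dlt : α → α → Polynomial ℤ) = 1 := by
  ext1 s t hst
  rw [toInc_apply _ hst, IncidenceAlgebra.one_apply, dlt]

lemma toInc_neg [PartialOrder α] (a : α → α → Polynomial ℤ) :
    toInc (fun s t => -a s t) = -toInc a := by
  ext1 s t hst
  rw [toInc_apply _ hst, IncidenceAlgebra.neg_apply, toInc_apply _ hst]

/-- The involution `rev` is multiplicative on `I_ρ(P)`. -/
lemma toInc_rev_conv [PartialOrder α] [LocallyFiniteOrder α] {ρ : α → α → ℕ}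
    (hρ : IsWeakRank ρ) {a b : α → α → Polynomial ℤ}
    (ha : ∀ s t, s ≤ t → (a s t).natDegree ≤ ρ s t)
    (hb : ∀ s t, s ≤ t → (b s t).natDegree ≤ ρ s t) :
    toInc (rev ρ (conv a b)) = toInc (rev ρ a) * toInc (rev ρ b) := by
  rw [← toInc_conv, toInc_eq_iff]
  intro s t _
  have hadd : ∀ (S : Finset α) (f : α → Polynomial ℤ) (n : ℕ),
      (∑ w ∈ S, f w).reflect n = ∑ w ∈ S, (f w).reflect n := by
    intro S f n
    induction S using Finset.induction_on with
    | empty => simp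
    | insert w S hw ih => rw [Finset.sum_insert hw, Finset.sum_insert hw, reflect_add, ih]
  simp only [rev, conv, hadd]
  refine Finset.sum_congr rfl fun w hw => ?_
  obtain ⟨h1, h2⟩ := Finset.mem_Icc.1 hw
  rw [hρ.add h1 h2, reflect_mul _ _ (ha _ _ h1) (hb _ _ h2)]

lemma smul_X_sub_one_cancel [PartialOrder α] {a b : IncidenceAlgebra (Polynomial ℤ) α}
    (h : (X - 1 : Polynomial ℤ) • a = (X - 1 : Polynomial ℤ) • b) : a = b := by
  ext1 s t _
  have := congrArg (fun f : IncidenceAlgebra (Polynomial ℤ) α => f s t) h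
  simp only [IncidenceAlgebra.constSMul_apply, smul_eq_mul] at this
  exact mul_left_cancel₀ (X_sub_C_ne_zero (1 : ℤ)) (by simpa using this)

/-- This sign rule is restated with the negation instance `IncidenceAlgebra.instNeg`, which the
general lemma does not match up to reducible unfolding; likewise for the next two. -/
lemma inc_mul_neg [PartialOrder α] [LocallyFiniteOrder α]
    (a b : IncidenceAlgebra (Polynomial ℤ) α) : a * -b = -(a * b) := mul_neg a b

lemma inc_neg_mul [PartialOrder α] [LocallyFiniteOrder α]
    (a b : IncidenceAlgebra (Polynomial ℤ) α) : -a * b = -(a * b) := neg_mul a b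

lemma inc_smul_neg [PartialOrder α] (p : Polynomial ℤ)
    (a : IncidenceAlgebra (Polynomial ℤ) α) : p • -a = -(p • a) := smul_neg p a

/-! ### The reduced kernel -/

variable [PartialOrder α] [LocallyFiniteOrder α] {ρ : α → α → ℕ} {κ H : α → α → Polynomial ℤ}

/-- At `x = 1` the involution `rev` is trivial, so `κ(1)` is unipotent with square `δ`, and
therefore equals `δ`. -/
lemma IsKernel.eval_one (hρ : IsWeakRank ρ) (hκ : IsKernel ρ κ) {s t : α} (hst : s < t) :
    (κ s t).eval 1 = 0 := by
  induction hn : ρ s t using Nat.strong_induction_on generalizing t with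
  | _ n ih =>
    have h := congrArg (Polynomial.eval 1) (hκ.right hst.le)
    rw [conv, dlt, if_neg hst.ne, eval_finsetSum, eval_zero,
      Finset.sum_eq_add s t hst.ne] at h
    · simp only [rev, eval_mul, reflect_eval_one (hκ.degLE hst.le),
        hκ.diag, hρ.self, reflect_one, pow_zero, Polynomial.eval_one] at h
      linarith
    · rintro w hw ⟨hws, hwt⟩
      obtain ⟨h1, h2⟩ := Finset.mem_Icc.1 hw
      have hwt' := lt_of_le_of_ne h2 hwt
      have hpos := hρ.pos hwt'
      have hadd := hρ.add h1 h2
      rw [eval_mul, ih (ρ s w) (by omega) (lt_of_le_of_ne h1 (Ne.symm hws)) rfl, zero_mul]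
    · intro h'
      exact absurd (Finset.mem_Icc.2 ⟨le_rfl, hst.le⟩) h'
    · intro h'
      exact absurd (Finset.mem_Icc.2 ⟨hst.le, le_rfl⟩) h'

lemma red_self {α : Type*} [PartialOrder α] (κ : α → α → Polynomial ℤ) (s : α) : red κ s s = -1 := if_pos rfl

/-- The division defining the reduced kernel is exact. -/
lemma IsKernel.mul_red (hρ : IsWeakRank ρ) (hκ : IsKernel ρ κ) {s t : α} (hst : s < t) :
    (X - 1) * red κ s t = κ s t := by
  rw [red, if_neg hst.ne]
  have := mul_divByMonic_eq_iff_isRoot (p := κ s t) (a := (1 : ℤ))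
  rw [C_1] at this
  exact this.2 (hκ.eval_one hρ hst)

lemma IsKernel.natDegree_red_le (hκ : IsKernel ρ κ) {s t : α} (hst : s < t) :
    (red κ s t).natDegree ≤ ρ s t - 1 := by
  have hm : (X - 1 : Polynomial ℤ).Monic := by simpa using monic_X_sub_C (1 : ℤ)
  have hd : (X - 1 : Polynomial ℤ).natDegree = 1 := by simpa using natDegree_X_sub_C (1 : ℤ)
  rw [red, if_neg hst.ne, natDegree_divByMonic _ hm, hd]
  exact Nat.sub_le_sub_right (hκ.degLE hst.le) 1

lemma IsKernel.natDegree_red_le' (hκ : IsKernel ρ κ) (s t : α) (hst : s ≤ t) :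
    (red κ s t).natDegree ≤ ρ s t := by
  rcases hst.eq_or_lt with rfl | hst
  · simp [red_self]
  · exact (hκ.natDegree_red_le hst).trans (Nat.sub_le _ _)

/-- The relation `(x - 1) κ̄ = κ - x δ`. -/
lemma IsKernel.smul_red (hρ : IsWeakRank ρ) (hκ : IsKernel ρ κ) :
    (X - 1 : Polynomial ℤ) • toInc (red κ) = toInc κ - (X : Polynomial ℤ) • 1 := by
  ext1 s t hst
  rw [IncidenceAlgebra.constSMul_apply, IncidenceAlgebra.sub_apply,
    IncidenceAlgebra.constSMul_apply, IncidenceAlgebra.one_apply, toInc_apply _ hst,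
    toInc_apply _ hst, smul_eq_mul, smul_eq_mul]
  rcases hst.eq_or_lt with rfl | hlt
  · rw [red_self, hκ.diag, if_pos rfl]
    ring
  · rw [hκ.mul_red hρ hlt, if_neg hlt.ne]
    ring

/-- The reversed form `(x - 1) κ̄^rev = δ - x κ^rev` of the defining relation of `κ̄`. -/
lemma IsKernel.smul_rev_red (hρ : IsWeakRank ρ) (hκ : IsKernel ρ κ) :
    (X - 1 : Polynomial ℤ) • toInc (rev ρ (red κ)) =
      1 - (X : Polynomial ℤ) • toInc (rev ρ κ) := by
  ext1 s t hst
  rw [IncidenceAlgebra.constSMul_apply, IncidenceAlgebra.sub_apply,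
    IncidenceAlgebra.constSMul_apply, IncidenceAlgebra.one_apply, toInc_apply _ hst,
    toInc_apply _ hst, smul_eq_mul, smul_eq_mul, rev, rev]
  rcases hst.eq_or_lt with rfl | hlt
  · rw [red_self, hκ.diag, if_pos rfl, hρ.self, reflect_neg, reflect_one]
    ring
  · obtain ⟨n, hn⟩ : ∃ n, ρ s t = n + 1 := ⟨ρ s t - 1, by have := hρ.pos hlt; omega⟩
    have hd : (red κ s t).natDegree ≤ n := by simpa [hn] using hκ.natDegree_red_le hlt
    have h1 : (X - 1 : Polynomial ℤ).natDegree ≤ 1 := by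
      simpa using (natDegree_X_sub_C (1 : ℤ)).le
    rw [← hκ.mul_red hρ hlt, hn, if_neg hlt.ne, reflect_succ_eq_X_mul hd, add_comm n 1,
      reflect_mul _ _ h1 hd, reflect_sub, reflect_one_X, reflect_one]
    ring

/-! ### The Chow function -/

lemma IsChow.left_inc (hH : IsChow κ H) : toInc (red κ) * toInc H = -1 := by
  rw [← toInc_conv, ← toInc_dlt, ← toInc_neg, toInc_eq_iff]
  exact fun s t h => hH.left h

lemma IsChow.right_inc (hH : IsChow κ H) : toInc H * toInc (red κ) = -1 := by
  rw [← toInc_conv, ← toInc_dlt, ← toInc_neg, toInc_eq_iff]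
  exact fun s t h => hH.right h

lemma IsChow.diag (hH : IsChow κ H) (s : α) : H s s = 1 := by
  have h := hH.left (le_refl s)
  simpa [conv, red_self, dlt] using h

/-- The Chow function lies in `I_ρ(P)`: for `s < t` the identity `κ̄ ℋ = -δ` expresses `ℋ_{st}`
through the values `ℋ_{wt}` with `s < w ≤ t`. -/
lemma IsChow.natDegree_le (hρ : IsWeakRank ρ) (hκ : IsKernel ρ κ) (hH : IsChow κ H)
    (s t : α) (hst : s ≤ t) : (H s t).natDegree ≤ ρ s t := by
  induction hn : ρ s t using Nat.strong_induction_on generalizing s with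
  | _ n ih =>
    rcases hst.eq_or_lt with rfl | hlt
    · simp [hH.diag]
    have h := hH.left hst
    rw [conv, dlt, if_neg hlt.ne, neg_zero,
      ← Finset.add_sum_erase _ _ (Finset.mem_Icc.2 ⟨le_refl s, hst⟩), red_self] at h
    have h' : H s t = ∑ w ∈ (Finset.Icc s t).erase s, red κ s w * H w t := by
      linear_combination -h
    rw [h']
    refine natDegree_sum_le_of_forall_le _ _ fun w hw => ?_
    obtain ⟨hws, hw⟩ := Finset.mem_erase.1 hw
    obtain ⟨h1, h2⟩ := Finset.mem_Icc.1 hw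
    have hpos := hρ.pos (lt_of_le_of_ne h1 (Ne.symm hws))
    have hadd := hρ.add h1 h2
    have hr := hκ.natDegree_red_le' s w h1
    have hHw := ih (ρ w t) (by omega) w h2 rfl
    exact natDegree_mul_le.trans (by omega)

/-- From `κ̄^rev = κ^rev κ̄` and `κ̄^rev ℋ^rev = -δ` one gets `ℋ^rev = ℋ κ`. -/
lemma IsChow.rev_eq_mul_kernel (hρ : IsWeakRank ρ) (hκ : IsKernel ρ κ) (hH : IsChow κ H) :
    toInc (rev ρ H) = toInc H * toInc κ := by
  have hKK' : toInc κ * toInc (rev ρ κ) = 1 := by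
    rw [← toInc_conv, ← toInc_dlt, toInc_eq_iff]
    exact fun s t h => hκ.right h
  have hK'K : toInc (rev ρ κ) * toInc κ = 1 := by
    rw [← toInc_conv, ← toInc_dlt, toInc_eq_iff]
    exact fun s t h => hκ.left h
  have hR : toInc (rev ρ (red κ)) = toInc (rev ρ κ) * toInc (red κ) := by
    apply smul_X_sub_one_cancel
    rw [← Algebra.mul_smul_comm, hκ.smul_red hρ, hκ.smul_rev_red hρ, mul_sub, hK'K, Algebra.mul_smul_comm,
      mul_one]
  have hRH : toInc (rev ρ (red κ)) * toInc (rev ρ H) = -1 := by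
    rw [← toInc_rev_conv hρ hκ.natDegree_red_le' (hH.natDegree_le hρ hκ), ← toInc_dlt,
      ← toInc_neg, toInc_eq_iff]
    intro s t hst
    rw [rev, hH.left hst, dlt]
    split_ifs with h
    · subst h
      rw [hρ.self, reflect_neg, reflect_one, pow_zero]
    · simp
  have hRH' : toInc (red κ) * toInc (rev ρ H) = -toInc κ := by
    calc toInc (red κ) * toInc (rev ρ H)
        = toInc κ * toInc (rev ρ κ) * (toInc (red κ) * toInc (rev ρ H)) := by
          rw [hKK', one_mul]
      _ = toInc κ * (toInc (rev ρ κ) * toInc (red κ) * toInc (rev ρ H)) := by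
          simp only [mul_assoc]
      _ = -toInc κ := by rw [← hR, hRH, inc_mul_neg, mul_one]
  have h := congrArg (fun f => toInc H * f) hRH'
  simp only [← mul_assoc, hH.right_inc, inc_mul_neg, inc_neg_mul, one_mul] at h
  exact neg_injective h

lemma IsChow.mul_kernel (hρ : IsWeakRank ρ) (hκ : IsKernel ρ κ) (hH : IsChow κ H) :
    toInc H * toInc κ = (X : Polynomial ℤ) • toInc H - (X - 1 : Polynomial ℤ) • 1 := by
  have h : toInc κ = (X - 1 : Polynomial ℤ) • toInc (red κ) + (X : Polynomial ℤ) • 1 := by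
    rw [hκ.smul_red hρ, sub_add_cancel]
  rw [h, mul_add, Algebra.mul_smul_comm, Algebra.mul_smul_comm, hH.right_inc, mul_one, inc_smul_neg]
  abel

lemma IsChow.kernel_mul (hρ : IsWeakRank ρ) (hκ : IsKernel ρ κ) (hH : IsChow κ H) :
    toInc κ * toInc H = (X : Polynomial ℤ) • toInc H - (X - 1 : Polynomial ℤ) • 1 := by
  have h : toInc κ = (X - 1 : Polynomial ℤ) • toInc (red κ) + (X : Polynomial ℤ) • 1 := by
    rw [hκ.smul_red hρ, sub_add_cancel]
  rw [h, add_mul, Algebra.smul_mul_assoc, Algebra.smul_mul_assoc, hH.left_inc, one_mul, inc_smul_neg]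
  abel

/-- Conditions (i) and (ii) together say `H^rev = x H - (x - 1) δ`. -/
lemma toInc_rev_of_symm (hρ : IsWeakRank ρ) (h1 : ∀ s : α, H s s = 1)
    (h2 : ∀ s t : α, s < t → PolySymm (ρ s t - 1) (H s t)) :
    toInc (rev ρ H) = (X : Polynomial ℤ) • toInc H - (X - 1 : Polynomial ℤ) • 1 := by
  ext1 s t hst
  rw [IncidenceAlgebra.sub_apply, IncidenceAlgebra.constSMul_apply,
    IncidenceAlgebra.constSMul_apply, IncidenceAlgebra.one_apply, toInc_apply _ hst,
    toInc_apply _ hst, smul_eq_mul, smul_eq_mul, rev]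
  rcases hst.eq_or_lt with rfl | hlt
  · rw [h1, if_pos rfl, hρ.self, reflect_one]
    ring
  · rw [if_neg hlt.ne, (h2 s t hlt).reflect_eq (hρ.pos hlt)]
    ring

end Helpers

/-- Proposition 3.5: the Chow function `ℋ` of a kernel `κ` satisfies (i) `ℋ_{ss} = 1`,
(ii) symmetry with center `(ρ_{st}-1)/2`, (iii) `κℋ = ℋ^rev` and `ℋκ = ℋ^rev`; moreover `ℋ` is
the unique element of `I_ρ(P)` satisfying (i), (ii) and at least one of the identities in (iii). -/
theorem chow_characterization [PartialOrder α] [LocallyFiniteOrder α]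
    (ρ : α → α → ℕ) (hρ : IsWeakRank ρ)
    (κ : α → α → Polynomial ℤ) (hκ : IsKernel ρ κ)
    (H : α → α → Polynomial ℤ) (hH : IsChow κ H) :
    ((∀ s : α, H s s = 1) ∧
     (∀ s t : α, s < t → PolySymm (ρ s t - 1) (H s t)) ∧
     (∀ s t : α, s ≤ t → conv κ H s t = rev ρ H s t) ∧
     (∀ s t : α, s ≤ t → conv H κ s t = rev ρ H s t)) ∧
    (∀ H' : α → α → Polynomial ℤ,
      (∀ s t : α, s ≤ t → (H' s t).natDegree ≤ ρ s t) →
      (∀ s : α, H' s s = 1) →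
      (∀ s t : α, s < t → PolySymm (ρ s t - 1) (H' s t)) →
      ((∀ s t : α, s ≤ t → conv κ H' s t = rev ρ H' s t) ∨
       (∀ s t : α, s ≤ t → conv H' κ s t = rev ρ H' s t)) →
      ∀ s t : α, s ≤ t → H' s t = H s t) := by
  have hrev := hH.rev_eq_mul_kernel hρ hκ
  have hHK := hH.mul_kernel hρ hκ
  have hKH := hH.kernel_mul hρ hκ
  refine ⟨⟨hH.diag, ?_, ?_, ?_⟩, ?_⟩
  · intro s t hst
    refine polySymm_of_reflect (hρ.pos hst) (hH.natDegree_le hρ hκ s t hst.le) ?_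
    have h := congrArg (fun f : IncidenceAlgebra (Polynomial ℤ) α => f s t) (hrev.trans hHK)
    simpa [IncidenceAlgebra.constSMul_apply, toInc_apply _ hst.le, hst.ne, rev] using h
  · rw [← toInc_eq_iff, toInc_conv, hrev, hKH, hHK]
  · rw [← toInc_eq_iff, toInc_conv, hrev]
  · intro H' _ h1 h2 h3
    have hsymm := toInc_rev_of_symm hρ h1 h2
    have hred := hκ.smul_red hρ
    rw [← toInc_eq_iff]
    rcases h3 with h3 | h3
    · rw [← toInc_eq_iff, toInc_conv, hsymm] at h3
      have h4 : toInc (red κ) * toInc H' = -1 := by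
        apply smul_X_sub_one_cancel
        rw [← Algebra.smul_mul_assoc, hred, sub_mul, h3, Algebra.smul_mul_assoc, one_mul, inc_smul_neg]
        abel
      have h5 := congrArg (fun f => toInc H * f) h4
      simp only [← mul_assoc, hH.right_inc, inc_mul_neg, inc_neg_mul, one_mul, mul_one] at h5
      exact neg_injective h5
    · rw [← toInc_eq_iff, toInc_conv, hsymm] at h3
      have h4 : toInc H' * toInc (red κ) = -1 := by
        apply smul_X_sub_one_cancel
        rw [← Algebra.mul_smul_comm, hred, mul_sub, h3, Algebra.mul_smul_comm, mul_one, inc_smul_neg]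
        abel
      have h5 := congrArg (fun f => f * toInc H) h4
      simp only [mul_assoc, hH.left_inc, inc_mul_neg, inc_neg_mul, one_mul, mul_one] at h5
      exact neg_injective h5
end
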